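/- arXiv:math/0002227 — 2 statements merged into one kernel-verified Lean document; each statement's English description precedes it below -/
import Mathlib

section
/- Define sequences of triples of real numbers by α₀⁽¹⁾ = 2^(1/4), α₀⁽²⁾ = 2^(1/2), α₀⁽³⁾ = 2^(3/4), and for each i, with aᵢ⁽ᵏ⁾ = ⌊αᵢ⁽ᵏ⁾⌋, set αᵢ₊₁⁽¹⁾ = 1/(αᵢ⁽³⁾ − aᵢ⁽³⁾), αᵢ₊₁⁽²⁾ = (αᵢ⁽¹⁾ − aᵢ⁽¹⁾)/(αᵢ⁽³⁾ − aᵢ⁽³⁾), αᵢ₊₁⁽³⁾ = (αᵢ⁽²⁾ − aᵢ⁽²⁾)/(αᵢ⁽³⁾ − aᵢ⁽³⁾). Then the integer sequences are eventually periodic with period 3: a₀⁽¹⁾ = a₀⁽²⁾ = a₀⁽³⁾ = 1, and for all i ≥ 1, aᵢ⁽¹⁾ = 2 if 3 divides i and aᵢ⁽¹⁾ = 1 otherwise, while aᵢ⁽²⁾ = aᵢ⁽³⁾ = 1 if 3 divides i and 0 otherwise. -/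
noncomputable def bcfStep (p : ℝ × ℝ × ℝ) : ℝ × ℝ × ℝ :=
  (1 / (p.2.2 - ⌊p.2.2⌋),
   (p.1 - ⌊p.1⌋) / (p.2.2 - ⌊p.2.2⌋),
   (p.2.1 - ⌊p.2.1⌋) / (p.2.2 - ⌊p.2.2⌋))

noncomputable def bcfSeq : ℕ → ℝ × ℝ × ℝ
  | 0 => ((2 : ℝ) ^ ((1 : ℝ) / 4), (2 : ℝ) ^ ((1 : ℝ) / 2), (2 : ℝ) ^ ((3 : ℝ) / 4))
  | i + 1 => bcfStep (bcfSeq i)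

/-- One step of the algorithm, once the integer parts are known. -/
lemma bcfStep_of_floor {x y z : ℝ} {a b c : ℤ} (hx : ⌊x⌋ = a) (hy : ⌊y⌋ = b) (hz : ⌊z⌋ = c) :
    bcfStep (x, y, z) = (1 / (z - c), (x - a) / (z - c), (y - b) / (z - c)) := by
  simp [bcfStep, hx, hy, hz]

section FourthRoot

variable {t : ℝ}

lemma fourthRoot_bounds (h0 : 0 < t) (h4 : t ^ 4 = 2) : 1.18 < t ∧ t < 1.2 := by
  constructor
  · refine lt_of_pow_lt_pow_left₀ 4 h0.le ?_
    rw [h4]; norm_num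
  · refine lt_of_pow_lt_pow_left₀ 4 (by norm_num) ?_
    rw [h4]; norm_num

lemma fourthRoot_sq_bounds (h0 : 0 < t) (h4 : t ^ 4 = 2) : 1.39 < t ^ 2 ∧ t ^ 2 < 1.44 := by
  obtain ⟨h1, h2⟩ := fourthRoot_bounds h0 h4
  constructor <;> nlinarith

lemma fourthRoot_cube_bounds (h0 : 0 < t) (h4 : t ^ 4 = 2) : 1.6 < t ^ 3 ∧ t ^ 3 < 1.73 := by
  obtain ⟨h1, h2⟩ := fourthRoot_bounds h0 h4
  obtain ⟨h3, h5⟩ := fourthRoot_sq_bounds h0 h4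
  constructor <;> nlinarith

lemma floor_fourthRoot (h0 : 0 < t) (h4 : t ^ 4 = 2) : ⌊t⌋ = 1 := by
  obtain ⟨h1, h2⟩ := fourthRoot_bounds h0 h4
  rw [Int.floor_eq_iff]
  constructor <;> push_cast <;> linarith

lemma floor_one_add_fourthRoot (h0 : 0 < t) (h4 : t ^ 4 = 2) : ⌊1 + t⌋ = 2 := by
  rw [add_comm, Int.floor_add_one, floor_fourthRoot h0 h4]; norm_num

lemma floor_fourthRoot_sq (h0 : 0 < t) (h4 : t ^ 4 = 2) : ⌊t ^ 2⌋ = 1 := by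
  obtain ⟨h1, h2⟩ := fourthRoot_sq_bounds h0 h4
  rw [Int.floor_eq_iff]
  constructor <;> push_cast <;> linarith

lemma floor_fourthRoot_cube (h0 : 0 < t) (h4 : t ^ 4 = 2) : ⌊t ^ 3⌋ = 1 := by
  obtain ⟨h1, h2⟩ := fourthRoot_cube_bounds h0 h4
  rw [Int.floor_eq_iff]
  constructor <;> push_cast <;> linarith

lemma floor_inv_fourthRoot_cube_sub_one (h0 : 0 < t) (h4 : t ^ 4 = 2) :
    ⌊1 / (t ^ 3 - 1)⌋ = 1 := by
  obtain ⟨h1, h2⟩ := fourthRoot_cube_bounds h0 h4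
  rw [Int.floor_eq_iff, le_div_iff₀ (by linarith), div_lt_iff₀ (by linarith)]
  constructor <;> push_cast <;> linarith

lemma floor_inv_one_add_fourthRoot_add_sq (h0 : 0 < t) : ⌊1 / (1 + t + t ^ 2)⌋ = 0 := by
  rw [Int.floor_eq_zero_iff, Set.mem_Ico, div_lt_one (by positivity)]
  exact ⟨by positivity, by nlinarith⟩

lemma floor_one_add_fourthRoot_div (h0 : 0 < t) : ⌊(1 + t) / (1 + t + t ^ 2)⌋ = 0 := by
  rw [Int.floor_eq_zero_iff, Set.mem_Ico, div_lt_one (by positivity)]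
  exact ⟨by positivity, by nlinarith⟩

lemma floor_one_add_fourthRoot_add_sq_div (h0 : 0 < t) (h4 : t ^ 4 = 2) :
    ⌊(1 + t + t ^ 2) / (1 + t)⌋ = 1 := by
  obtain ⟨h1, -⟩ := fourthRoot_bounds h0 h4
  obtain ⟨h2, h3⟩ := fourthRoot_sq_bounds h0 h4
  rw [Int.floor_eq_iff, le_div_iff₀ (by linarith), div_lt_iff₀ (by linarith)]
  constructor <;> push_cast <;> linarith

lemma floor_fourthRoot_cube_div (h0 : 0 < t) (h4 : t ^ 4 = 2) : ⌊t ^ 3 / (1 + t)⌋ = 0 := by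
  obtain ⟨h1, -⟩ := fourthRoot_bounds h0 h4
  obtain ⟨-, h3⟩ := fourthRoot_cube_bounds h0 h4
  rw [Int.floor_eq_zero_iff, Set.mem_Ico, div_lt_one (by positivity)]
  exact ⟨by positivity, by linarith⟩

lemma floor_inv_one_add_fourthRoot (h0 : 0 < t) : ⌊1 / (1 + t)⌋ = 0 := by
  rw [Int.floor_eq_zero_iff, Set.mem_Ico, div_lt_one (by positivity)]
  exact ⟨by positivity, by linarith⟩

/-- The image of both `(t, t ^ 2, t ^ 3)` and `(1 + t, t ^ 2, t ^ 3)` depends only on the common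
fractional parts. -/
lemma bcfStep_of_fract_eq {x : ℝ} {a : ℤ} (h0 : 0 < t) (h4 : t ^ 4 = 2) (hx : ⌊x⌋ = a)
    (hxt : x - a = t - 1) :
    bcfStep (x, t ^ 2, t ^ 3) =
      (1 / (t ^ 3 - 1), 1 / (1 + t + t ^ 2), (1 + t) / (1 + t + t ^ 2)) := by
  rw [bcfStep_of_floor hx (floor_fourthRoot_sq h0 h4) (floor_fourthRoot_cube h0 h4), hxt]
  have h3 : t ^ 3 - 1 ≠ 0 := by
    have := (fourthRoot_cube_bounds h0 h4).1
    exact ne_of_gt (by linarith)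
  have hs : 1 + t + t ^ 2 ≠ 0 := by positivity
  push_cast
  refine Prod.ext rfl (Prod.ext ?_ ?_)
  · rw [div_eq_div_iff h3 hs]; ring
  · rw [div_eq_div_iff h3 hs]; ring

lemma bcfStep_inv_cube_sub_one (h0 : 0 < t) (h4 : t ^ 4 = 2) :
    bcfStep (1 / (t ^ 3 - 1), 1 / (1 + t + t ^ 2), (1 + t) / (1 + t + t ^ 2)) =
      ((1 + t + t ^ 2) / (1 + t), t ^ 3 / (1 + t), 1 / (1 + t)) := by
  rw [bcfStep_of_floor (floor_inv_fourthRoot_cube_sub_one h0 h4)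
    (floor_inv_one_add_fourthRoot_add_sq h0) (floor_one_add_fourthRoot_div h0)]
  have h3 : t ^ 3 - 1 ≠ 0 := by
    have := (fourthRoot_cube_bounds h0 h4).1
    exact ne_of_gt (by linarith)
  have hs : 1 + t + t ^ 2 ≠ 0 := by positivity
  have hp : 1 + t ≠ 0 := by positivity
  have hfract : 1 / (t ^ 3 - 1) - 1 = t ^ 3 / (1 + t + t ^ 2) := by
    rw [div_sub_one h3, div_eq_div_iff h3 hs]
    linear_combination (-(1 + t + t ^ 2)) * h4
  push_cast
  rw [hfract]
  refine Prod.ext ?_ (Prod.ext ?_ ?_) <;> simp <;> field_simp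

lemma bcfStep_one_add_add_sq_div (h0 : 0 < t) (h4 : t ^ 4 = 2) :
    bcfStep ((1 + t + t ^ 2) / (1 + t), t ^ 3 / (1 + t), 1 / (1 + t)) =
      (1 + t, t ^ 2, t ^ 3) := by
  rw [bcfStep_of_floor (floor_one_add_fourthRoot_add_sq_div h0 h4)
    (floor_fourthRoot_cube_div h0 h4) (floor_inv_one_add_fourthRoot h0)]
  have hp : 1 + t ≠ 0 := by positivity
  refine Prod.ext ?_ (Prod.ext ?_ ?_) <;> simp <;> field_simp
  ring

end FourthRoot

lemma bcfSeq_zero_eq {t : ℝ} (ht : t = (2 : ℝ) ^ ((1 : ℝ) / 4)) :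
    bcfSeq 0 = (t, t ^ 2, t ^ 3) := by
  rw [bcfSeq, ht, ← Real.rpow_mul_natCast (by norm_num), ← Real.rpow_mul_natCast (by norm_num)]
  norm_num

/-- The orbit is periodic with period three from index one on. -/
lemma bcfSeq_orbit {t : ℝ} (h0 : 0 < t) (h4 : t ^ 4 = 2) (hz : bcfSeq 0 = (t, t ^ 2, t ^ 3))
    (k : ℕ) :
    bcfSeq (3 * k + 1) = (1 / (t ^ 3 - 1), 1 / (1 + t + t ^ 2), (1 + t) / (1 + t + t ^ 2)) ∧
    bcfSeq (3 * k + 2) = ((1 + t + t ^ 2) / (1 + t), t ^ 3 / (1 + t), 1 / (1 + t)) ∧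
    bcfSeq (3 * k + 3) = (1 + t, t ^ 2, t ^ 3) := by
  have follow (n : ℕ) (h : bcfSeq (n + 1) =
      (1 / (t ^ 3 - 1), 1 / (1 + t + t ^ 2), (1 + t) / (1 + t + t ^ 2))) :
      bcfSeq (n + 2) = ((1 + t + t ^ 2) / (1 + t), t ^ 3 / (1 + t), 1 / (1 + t)) ∧
      bcfSeq (n + 3) = (1 + t, t ^ 2, t ^ 3) := by
    have h2 := bcfStep_inv_cube_sub_one h0 h4
    rw [← h] at h2
    have h3 := bcfStep_one_add_add_sq_div h0 h4
    rw [← h2] at h3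
    exact ⟨h2, h3⟩
  induction k with
  | zero =>
    have h1 := bcfStep_of_fract_eq h0 h4 (floor_fourthRoot h0 h4) (by push_cast; ring)
    rw [← hz] at h1
    exact ⟨h1, follow 0 h1⟩
  | succ k ih =>
    have h1 := bcfStep_of_fract_eq h0 h4 (floor_one_add_fourthRoot h0 h4) (by push_cast; ring)
    rw [← ih.2.2] at h1
    exact ⟨h1, follow (3 * (k + 1)) h1⟩

theorem stmt_14 :
    (⌊(bcfSeq 0).1⌋ = 1 ∧ ⌊(bcfSeq 0).2.1⌋ = 1 ∧ ⌊(bcfSeq 0).2.2⌋ = 1) ∧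
    ∀ i : ℕ, 1 ≤ i →
      (⌊(bcfSeq i).1⌋ = if 3 ∣ i then 2 else 1) ∧
      (⌊(bcfSeq i).2.1⌋ = if 3 ∣ i then 1 else 0) ∧
      (⌊(bcfSeq i).2.2⌋ = if 3 ∣ i then 1 else 0) := by
  obtain ⟨t, ht⟩ : ∃ t : ℝ, t = (2 : ℝ) ^ ((1 : ℝ) / 4) := ⟨_, rfl⟩
  have h0 : 0 < t := by rw [ht]; positivity
  have h4 : t ^ 4 = 2 := by
    rw [ht, ← Real.rpow_mul_natCast (by norm_num)]; norm_num
  have hz := bcfSeq_zero_eq ht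
  refine ⟨?_, fun i hi => ?_⟩
  · rw [hz]
    exact ⟨floor_fourthRoot h0 h4, floor_fourthRoot_sq h0 h4, floor_fourthRoot_cube h0 h4⟩
  obtain ⟨k, hk⟩ : ∃ k, i = 3 * k + 1 ∨ i = 3 * k + 2 ∨ i = 3 * k + 3 :=
    ⟨(i - 1) / 3, by omega⟩
  obtain ⟨e1, e2, e3⟩ := bcfSeq_orbit h0 h4 hz k
  rcases hk with rfl | rfl | rfl
  · have hd : ¬ 3 ∣ 3 * k + 1 := by omega
    rw [e1]
    simp only [hd, if_false]
    exact ⟨floor_inv_fourthRoot_cube_sub_one h0 h4, floor_inv_one_add_fourthRoot_add_sq h0,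
      floor_one_add_fourthRoot_div h0⟩
  · have hd : ¬ 3 ∣ 3 * k + 2 := by omega
    rw [e2]
    simp only [hd, if_false]
    exact ⟨floor_one_add_fourthRoot_add_sq_div h0 h4, floor_fourthRoot_cube_div h0 h4,
      floor_inv_one_add_fourthRoot h0⟩
  · have hd : 3 ∣ 3 * k + 3 := by omega
    rw [e3]
    simp only [hd, if_true]
    exact ⟨floor_one_add_fourthRoot h0 h4, floor_fourthRoot_sq h0 h4,
      floor_fourthRoot_cube h0 h4⟩
end

section
/- Let a₀, b₀, a₁, b₁ be nonnegative integers and let α, β, α', β' be positive real numbers satisfying the period-two bifurcating continued fraction fixed-point system α = a₀ + β'/α', β = b₀ + 1/α', α' = a₁ + β/α, β' = b₁ + 1/α. Then α is algebraic over ℚ of degree at most 3, i.e., there exists a nonzero polynomial p with rational coefficients of degree at most 3 such that p(α) = 0. -/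
open Polynomial in
/-- A real root of a cubic with rational coefficients and nonzero leading coefficient is algebraic
of degree at most three. -/
theorem exists_degree_le_three_of_cubic {x : ℝ} {a b c d : ℚ} (ha : a ≠ 0)
    (h : (a : ℝ) * x ^ 3 + b * x ^ 2 + c * x + d = 0) :
    ∃ p : ℚ[X], p ≠ 0 ∧ p.degree ≤ 3 ∧ aeval x p = 0 := by
  refine ⟨C a * X ^ 3 + C b * X ^ 2 + C c * X + C d, ?_, degree_cubic_le, ?_⟩
  · intro h0
    have hdeg := degree_cubic (b := b) (c := c) (d := d) ha
    rw [h0, degree_zero] at hdeg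
    exact absurd hdeg (by decide)
  · simpa using h

/-- Eliminating `y` from `x (x - a₀) y = b₁ x + 1` and `x y (y - a₁) = b₀ y + 1`. -/
theorem cubic_of_period_two {a₀ b₀ a₁ b₁ x y : ℝ} (hx : x ≠ 0)
    (h₁ : x * (x - a₀) * y = b₁ * x + 1) (h₂ : x * y * (y - a₁) = b₀ * y + 1) :
    x * (x - a₀) ^ 2 + b₀ * (b₁ * x + 1) * (x - a₀) + a₁ * (b₁ * x + 1) * (x * (x - a₀))
      - (b₁ * x + 1) ^ 2 = 0 := by
  rw [← h₁]
  apply mul_left_cancel₀ hx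
  linear_combination (-(x ^ 2 * (x - a₀) ^ 2)) * h₂

theorem stmt_15 (a₀ b₀ a₁ b₁ : ℕ) (α β α' β' : ℝ)
    (hα : 0 < α) (hβ : 0 < β) (hα' : 0 < α') (hβ' : 0 < β')
    (e₁ : α = a₀ + β' / α') (e₂ : β = b₀ + 1 / α')
    (e₃ : α' = a₁ + β / α) (e₄ : β' = b₁ + 1 / α) :
    ∃ p : Polynomial ℚ, p ≠ 0 ∧ p.degree ≤ 3 ∧ Polynomial.aeval α p = 0 := by
  have h₁ : α * (α - a₀) * α' = b₁ * α + 1 := by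
    have h : (α - a₀) * α' = β' := by
      rw [sub_eq_of_eq_add' e₁, div_mul_cancel₀ _ hα'.ne']
    rw [mul_assoc, h, e₄]
    field_simp
  have h₂ : α * α' * (α' - a₁) = b₀ * α' + 1 := by
    have h : α * (α' - a₁) = β := by
      rw [sub_eq_of_eq_add' e₃, mul_div_cancel₀ _ hα.ne']
    rw [mul_right_comm, h, e₂]
    field_simp
  refine exists_degree_le_three_of_cubic (a := 1 + a₁ * b₁)
    (b := -2 * a₀ + b₀ * b₁ + a₁ * (1 - b₁ * a₀) - b₁ ^ 2)
    (c := a₀ ^ 2 + b₀ * (1 - a₀ * b₁) - a₁ * a₀ - 2 * b₁)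
    (d := -(b₀ * a₀) - 1) (by positivity) ?_
  push_cast
  linear_combination cubic_of_period_two hα.ne' h₁ h₂
end
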